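/- Let L ≥ 1 and m_1, …, m_L ≥ 1, and consider the product X = SH_{m_1} × … × SH_{m_L} of Siegel upper half spaces. Let x = (x_1,…,x_L), a = (a_1,…,a_L), p = (p_1,…,p_L) ∈ X with x ≠ p and a_j ≠ iI_{m_j} for at least one j. Write A_j = log(φ(a_j) φ(a_j)ᵀ) and, for q = (q_1,…,q_L) ∈ X, M_j(q) = log(φ(p_j)^{-1} φ(q_j) φ(q_j)ᵀ φ(p_j)^{-ᵀ}). Let the hyperplane be H = { q ∈ X : Σ_{j=1}^L ⟨M_j(q), A_j⟩ = 0 } and let C = sup { Σ_j ⟨M_j(q), M_j(x)⟩ / ( sqrt(Σ_j ‖M_j(q)‖²) · sqrt(Σ_j ‖M_j(x)‖²) ) : q ∈ H, q ≠ p }. Then sqrt(1 − C²) · sqrt(Σ_{j=1}^L ‖M_j(x)‖²) = |Σ_{j=1}^L ⟨M_j(x), A_j⟩| / sqrt(Σ_{j=1}^L ‖A_j‖²); i.e., the point-to-hyperplane distance on the product space is given by the formula of Theorem 2 (stated here for a product of Siegel factors). -/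

import Mathlib

open Matrix

/-- Membership in the Siegel upper half space. -/
def inSH {m : ℕ} (x : Matrix (Fin m) (Fin m) ℂ) : Prop :=
  ∃ u v : Matrix (Fin m) (Fin m) ℝ, uᵀ = u ∧ v.PosDef ∧
    x = u.map ((↑) : ℝ → ℂ) + Complex.I • v.map ((↑) : ℝ → ℂ)

/-- Real part of a complex matrix. -/
def rePart {n : ℕ} (x : Matrix (Fin n) (Fin n) ℂ) : Matrix (Fin n) (Fin n) ℝ :=
  Matrix.of fun i j => (x i j).re

/-- Imaginary part of a complex matrix. -/
def imPart {n : ℕ} (x : Matrix (Fin n) (Fin n) ℂ) : Matrix (Fin n) (Fin n) ℝ :=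
  Matrix.of fun i j => (x i j).im

open scoped Classical in
/-- The unique symmetric positive definite square root (when it exists). -/
noncomputable def spdSqrt {n : ℕ} (v : Matrix (Fin n) (Fin n) ℝ) :
    Matrix (Fin n) (Fin n) ℝ :=
  if h : ∃ r : Matrix (Fin n) (Fin n) ℝ, r.PosDef ∧ r * r = v then h.choose else 0

open scoped Classical in
/-- The principal matrix logarithm: the unique symmetric matrix whose matrix
exponential is the given symmetric positive definite matrix. -/
noncomputable def spdLog {n : Type*} [Fintype n] [DecidableEq n]
    (P : Matrix n n ℝ) : Matrix n n ℝ :=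
  if h : ∃ L : Matrix n n ℝ, Lᵀ = L ∧ NormedSpace.exp L = P then h.choose else 0

/-- The representative φ(x) = [[v^{1/2}, u v^{-1/2}], [0, v^{-1/2}]] of
x = u + iv. -/
noncomputable def phiMap {n : ℕ} (x : Matrix (Fin n) (Fin n) ℂ) :
    Matrix (Fin n ⊕ Fin n) (Fin n ⊕ Fin n) ℝ :=
  Matrix.fromBlocks (spdSqrt (imPart x)) (rePart x * (spdSqrt (imPart x))⁻¹)
    0 (spdSqrt (imPart x))⁻¹

/-- The Frobenius inner product ⟨A,B⟩ = Tr(AᵀB). -/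
noncomputable def frobInner {n : Type*} [Fintype n] (A B : Matrix n n ℝ) : ℝ :=
  Matrix.trace (Aᵀ * B)

/-- The Frobenius norm. -/
noncomputable def frobNorm {n : Type*} [Fintype n] (A : Matrix n n ℝ) : ℝ :=
  Real.sqrt (Matrix.trace (Aᵀ * A))

/-- M_j(q) = log(φ(p_j)⁻¹ φ(q_j) φ(q_j)ᵀ φ(p_j)⁻ᵀ). -/
noncomputable def Mlog {m : ℕ} (p q : Matrix (Fin m) (Fin m) ℂ) :
    Matrix (Fin m ⊕ Fin m) (Fin m ⊕ Fin m) ℝ :=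
  spdLog ((phiMap p)⁻¹ * phiMap q * (phiMap q)ᵀ * ((phiMap p)⁻¹)ᵀ)

/-!
The map `q ↦ (M_j(q))_j` is a bijection from the product of Siegel upper half spaces onto the
linear space `V = ∏ 𝔭_j`, where `𝔭` is the symmetric part of the symplectic Lie algebra, and it
sends `p` to `0`: the map `x ↦ φ(x) φ(x)ᵀ` identifies `SH_m` with the positive definite symplectic
matrices, on which `φ(p)⁻¹` acts bijectively by congruence, and the logarithm identifies these with
`𝔭`. So the hyperplane `H` corresponds to the linear hyperplane `Aᗮ` of `V`, `C` is the cosine of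
the angle between `X = (M_j(x))_j` and its orthogonal projection onto `Aᗮ`, and
`√(1 - C²) ‖X‖` is the length of the component of `X` along `A`.
-/

section CosineSupremum

open InnerProductGeometry RealInnerProductSpace

variable {E : Type*} [NormedAddCommGroup E] [InnerProductSpace ℝ E]

lemma inner_eq_inner_starProjection_of_mem (K : Submodule ℝ E) [K.HasOrthogonalProjection]
    {Y : E} (hY : Y ∈ K) (X : E) : ⟪Y, X⟫ = ⟪Y, K.starProjection X⟫ := by
  rw [← K.inner_starProjection_left_eq_right, K.starProjection_eq_self_iff.2 hY]

lemma sSup_cos_angle_eq_norm_starProjection_div (K : Submodule ℝ E) [K.HasOrthogonalProjection]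
    (X : E) :
    sSup {c | ∃ Y ∈ K, Y ≠ 0 ∧ c = Real.cos (angle Y X)} = ‖K.starProjection X‖ / ‖X‖ := by
  have hcos : ∀ Y ∈ K, Real.cos (angle Y X) = ⟪Y, K.starProjection X⟫ / (‖Y‖ * ‖X‖) :=
    fun Y hY => by rw [cos_angle, inner_eq_inner_starProjection_of_mem K hY]
  have hle : ∀ Y ∈ K, Real.cos (angle Y X) ≤ ‖K.starProjection X‖ / ‖X‖ := fun Y hY =>
    calc Real.cos (angle Y X)
        = ⟪Y, K.starProjection X⟫ / ‖Y‖ / ‖X‖ := by rw [hcos Y hY, div_div]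
      _ ≤ ‖K.starProjection X‖ / ‖X‖ := by
        gcongr
        exact div_le_of_le_mul₀ (norm_nonneg _) (norm_nonneg _)
          ((real_inner_le_norm _ _).trans_eq (mul_comm _ _))
  by_cases hX : K.starProjection X = 0
  · rw [hX, norm_zero, zero_div]
    have hzero : ∀ Y ∈ K, Real.cos (angle Y X) = 0 := fun Y hY => by
      rw [hcos Y hY, hX, inner_zero_right, zero_div]
    refine le_antisymm (Real.sSup_nonpos ?_) (Real.sSup_nonneg ?_)
    · rintro _ ⟨Y, hY, -, rfl⟩
      exact (hzero Y hY).le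
    · rintro _ ⟨Y, hY, -, rfl⟩
      exact (hzero Y hY).ge
  · refine IsGreatest.csSup_eq ⟨⟨_, K.starProjection_apply_mem X, hX, ?_⟩, ?_⟩
    · rw [hcos _ (K.starProjection_apply_mem X), real_inner_self_eq_norm_mul_norm,
        mul_div_mul_left _ _ (norm_ne_zero_iff.2 hX)]
    · rintro _ ⟨Y, hY, -, rfl⟩
      exact hle Y hY

lemma sqrt_one_sub_sSup_cos_angle_orthogonal_sq_mul_norm (K : Submodule ℝ E)
    [K.HasOrthogonalProjection] (X : E) :
    √(1 - sSup {c | ∃ Y ∈ Kᗮ, Y ≠ 0 ∧ c = Real.cos (angle Y X)} ^ 2) * ‖X‖ =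
      ‖K.starProjection X‖ := by
  rcases eq_or_ne X 0 with rfl | hX
  · simp only [norm_zero, mul_zero, map_zero]
  have hX' : ‖X‖ ≠ 0 := norm_ne_zero_iff.2 hX
  have hpyth := K.norm_sq_eq_add_norm_sq_starProjection X
  have hsin : 1 - (‖Kᗮ.starProjection X‖ / ‖X‖) ^ 2 = (‖K.starProjection X‖ / ‖X‖) ^ 2 := by
    field_simp
    linarith
  rw [sSup_cos_angle_eq_norm_starProjection_div, hsin, Real.sqrt_sq (by positivity),
    div_mul_cancel₀ _ hX']

lemma norm_starProjection_span_singleton (A X : E) :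
    ‖(ℝ ∙ A).starProjection X‖ = |⟪X, A⟫| / ‖A‖ := by
  rw [Submodule.starProjection_singleton, norm_smul, real_inner_comm]
  rcases eq_or_ne A 0 with rfl | hA
  · simp
  · have := norm_ne_zero_iff.2 hA
    simp only [RCLike.ofReal_real_eq_id, id_eq, norm_div, Real.norm_eq_abs, norm_pow, abs_norm]
    field_simp

lemma sqrt_one_sub_sSup_cos_angle_hyperplane (V : Submodule ℝ E) {A X : E} (hA : A ∈ V)
    (hX : X ∈ V) :
    √(1 - sSup {c | ∃ Y ∈ V, ⟪Y, A⟫ = 0 ∧ Y ≠ 0 ∧ c = Real.cos (angle Y X)} ^ 2) * ‖X‖ =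
      |⟪X, A⟫| / ‖A‖ := by
  lift A to V using hA
  lift X to V using hX
  have hset : {c | ∃ Y ∈ V, ⟪Y, (A : E)⟫ = 0 ∧ Y ≠ 0 ∧ c = Real.cos (angle Y X)} =
      {c | ∃ Y ∈ (ℝ ∙ A)ᗮ, Y ≠ 0 ∧ c = Real.cos (angle Y X)} := by
    ext c
    simp [Submodule.mem_orthogonal_singleton_iff_inner_left, and_left_comm,
      ← Submodule.angle_coe]
  rw [hset]
  exact (sqrt_one_sub_sSup_cos_angle_orthogonal_sq_mul_norm (ℝ ∙ A) X).trans
    (norm_starProjection_span_singleton A X)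

end CosineSupremum

section FrobeniusProduct

open InnerProductGeometry RealInnerProductSpace

variable {ι : Type*} [Fintype ι] {n : ι → Type*} [∀ j, Fintype (n j)]

/-- Vectorisation of a family of square matrices: it carries `∑ j, frobInner (Y j) (Z j)` to the
Euclidean inner product. -/
def frobVec : ((j : ι) → Matrix (n j) (n j) ℝ) ≃ₗ[ℝ] EuclideanSpace ℝ (Σ j, n j × n j) where
  toFun Y := WithLp.toLp 2 fun k => Y k.1 k.2.1 k.2.2
  map_add' _ _ := rfl
  map_smul' _ _ := rfl
  invFun y j := Matrix.of fun a b => y ⟨j, a, b⟩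
  left_inv _ := rfl
  right_inv _ := rfl

lemma frobInner_eq_sum {n : Type*} [Fintype n] (A B : Matrix n n ℝ) :
    frobInner A B = ∑ k : n × n, A k.1 k.2 * B k.1 k.2 := by
  rw [Fintype.sum_prod_type_right]
  rfl

lemma inner_frobVec (Y Z : (j : ι) → Matrix (n j) (n j) ℝ) :
    ⟪frobVec Y, frobVec Z⟫ = ∑ j, frobInner (Y j) (Z j) := by
  simp only [PiLp.inner_apply, Fintype.sum_sigma, frobInner_eq_sum]
  exact Finset.sum_congr rfl fun _ _ => Finset.sum_congr rfl fun _ _ => mul_comm _ _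

lemma frobNorm_sq {n : Type*} [Fintype n] (A : Matrix n n ℝ) : frobNorm A ^ 2 = frobInner A A := by
  have h : 0 ≤ frobInner A A := by
    rw [frobInner_eq_sum]
    exact Finset.sum_nonneg fun _ _ => mul_self_nonneg _
  exact Real.sq_sqrt h

lemma norm_frobVec (Y : (j : ι) → Matrix (n j) (n j) ℝ) :
    ‖frobVec Y‖ = √(∑ j, frobNorm (Y j) ^ 2) := by
  simp only [norm_eq_sqrt_real_inner, inner_frobVec, frobNorm_sq]

lemma sqrt_one_sub_sSup_frobInner_hyperplane (V : Submodule ℝ ((j : ι) → Matrix (n j) (n j) ℝ))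
    {A X : (j : ι) → Matrix (n j) (n j) ℝ} (hA : A ∈ V) (hX : X ∈ V) :
    √(1 - sSup {c | ∃ Y ∈ V, ∑ j, frobInner (Y j) (A j) = 0 ∧ Y ≠ 0 ∧
        c = (∑ j, frobInner (Y j) (X j)) /
          (√(∑ j, frobNorm (Y j) ^ 2) * √(∑ j, frobNorm (X j) ^ 2))} ^ 2) *
      √(∑ j, frobNorm (X j) ^ 2) =
      |∑ j, frobInner (X j) (A j)| / √(∑ j, frobNorm (A j) ^ 2) := by
  have h := sqrt_one_sub_sSup_cos_angle_hyperplane (V.map frobVec.toLinearMap)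
    (Submodule.mem_map_of_mem hA) (Submodule.mem_map_of_mem hX)
  simpa only [Submodule.mem_map, exists_exists_and_eq_and, LinearEquiv.coe_coe, cos_angle,
    inner_frobVec, norm_frobVec, ne_eq, LinearEquiv.map_eq_zero_iff] using h

end FrobeniusProduct

section MatrixLogarithm

open scoped Matrix.Norms.L2Operator MatrixOrder

variable {n : Type*} [Fintype n] [DecidableEq n]

lemma posDef_exp {S : Matrix n n ℝ} (hS : S.IsSymm) : (NormedSpace.exp S).PosDef :=
  have hself : IsSelfAdjoint S := isHermitian_iff_isSymm.2 hS
  ((isUnit_exp S).isStrictlyPositive hself.exp_nonneg).posDef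

lemma exp_injOn_isSymm : {S : Matrix n n ℝ | S.IsSymm}.InjOn NormedSpace.exp := by
  intro S hS T hT h
  rw [← CFC.log_exp S (isHermitian_iff_isSymm.2 hS),
    ← CFC.log_exp T (isHermitian_iff_isSymm.2 hT), h]

lemma spdLog_spec {P : Matrix n n ℝ} (hP : P.PosDef) :
    (spdLog P).IsSymm ∧ NormedSpace.exp (spdLog P) = P := by
  have h : ∃ L : Matrix n n ℝ, Lᵀ = L ∧ NormedSpace.exp L = P :=
    ⟨CFC.log P, isHermitian_iff_isSymm.1 IsSelfAdjoint.log, CFC.exp_log P hP.isStrictlyPositive⟩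
  rw [spdLog, dif_pos h]
  exact h.choose_spec

lemma spdLog_exp {S : Matrix n n ℝ} (hS : S.IsSymm) : spdLog (NormedSpace.exp S) = S :=
  have h := spdLog_spec (posDef_exp hS)
  exp_injOn_isSymm h.1 hS h.2

lemma spdLog_one : spdLog (1 : Matrix n n ℝ) = 0 := by
  rw [← NormedSpace.exp_zero, spdLog_exp isSymm_zero]

lemma spdSqrt_spec {m : ℕ} {v : Matrix (Fin m) (Fin m) ℝ} (hv : v.PosDef) :
    (spdSqrt v).PosDef ∧ spdSqrt v * spdSqrt v = v := by
  have h : ∃ r : Matrix (Fin m) (Fin m) ℝ, r.PosDef ∧ r * r = v :=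
    ⟨CFC.sqrt v, hv.isStrictlyPositive.sqrt.posDef, CFC.sqrt_mul_sqrt_self v hv.posSemidef.nonneg⟩
  rw [spdSqrt, dif_pos h]
  exact h.choose_spec

lemma spdSqrt_isSymm {m : ℕ} {v : Matrix (Fin m) (Fin m) ℝ} (hv : v.PosDef) : (spdSqrt v).IsSymm :=
  isHermitian_iff_isSymm.1 (spdSqrt_spec hv).1.isHermitian

end MatrixLogarithm

section SymplecticPosDef

variable (l : Type*) [Fintype l] [DecidableEq l]

/-- The symmetric space of the real symplectic group, realised as the set of symmetric positive
definite symplectic matrices. -/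
def posDefSymplectic : Set (Matrix (l ⊕ l) (l ⊕ l) ℝ) :=
  {P | P.PosDef ∧ P ∈ symplecticGroup l ℝ}

/-- The symmetric part `𝔭` of the Cartan decomposition of the symplectic Lie algebra, i.e. the
tangent space at `1` of `posDefSymplectic l`. -/
def symmetricSymplectic : Submodule ℝ (Matrix (l ⊕ l) (l ⊕ l) ℝ) :=
  selfAdjoint.submodule ℝ _ ⊓ skewAdjointMatricesSubmodule (J l ℝ)

variable {l}

lemma mem_symmetricSymplectic {S : Matrix (l ⊕ l) (l ⊕ l) ℝ} :
    S ∈ symmetricSymplectic l ↔ S.IsSymm ∧ S * J l ℝ = J l ℝ * -S := by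
  rw [symmetricSymplectic, Submodule.mem_inf, mem_skewAdjointMatricesSubmodule]
  refine (and_congr_left' isHermitian_iff_isSymm).trans (and_congr_right fun hS => ?_)
  rw [Matrix.IsSkewAdjoint, Matrix.IsAdjointPair, hS.eq]

lemma mul_eq_mul_iff_inv_mul_mul_eq {n R : Type*} [Fintype n] [DecidableEq n] [CommRing R]
    {U A B : Matrix n n R} (hU : IsUnit U.det) : A * U = U * B ↔ U⁻¹ * A * U = B := by
  constructor
  · intro h
    rw [Matrix.mul_assoc, h, nonsing_inv_mul_cancel_left _ _ hU]
  · rintro rfl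
    rw [Matrix.mul_assoc, mul_nonsing_inv_cancel_left _ _ hU]

lemma isSymm_inv_J_mul_mul_J {R : Type*} [CommRing R] {S : Matrix (l ⊕ l) (l ⊕ l) R}
    (hS : S.IsSymm) : ((J l R)⁻¹ * S * J l R).IsSymm := by
  simp [IsSymm, transpose_mul, J_inv, J_transpose, hS.eq, Matrix.mul_assoc]

lemma exp_mem_symplecticGroup_iff {S : Matrix (l ⊕ l) (l ⊕ l) ℝ} (hS : S.IsSymm) :
    NormedSpace.exp S ∈ symplecticGroup l ℝ ↔ S ∈ symmetricSymplectic l := by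
  have hJ := isUnit_det_J l ℝ
  have hE : IsUnit (NormedSpace.exp S).det := (isUnit_iff_isUnit_det _).1 (isUnit_exp S)
  calc NormedSpace.exp S ∈ symplecticGroup l ℝ
      ↔ NormedSpace.exp S * J l ℝ * NormedSpace.exp S = J l ℝ := by
        rw [SymplecticGroup.mem_iff, ← exp_transpose, hS.eq]
    _ ↔ NormedSpace.exp S * J l ℝ = J l ℝ * NormedSpace.exp (-S) := by
        rw [Matrix.exp_neg]
        constructor
        · intro h
          rw [← h, mul_nonsing_inv_cancel_right _ _ hE, h]
        · intro h
          rw [h, nonsing_inv_mul_cancel_right _ _ hE]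
    _ ↔ NormedSpace.exp ((J l ℝ)⁻¹ * S * J l ℝ) = NormedSpace.exp (-S) := by
        rw [mul_eq_mul_iff_inv_mul_mul_eq hJ,
          exp_conj' _ _ ((isUnit_iff_isUnit_det _).2 hJ)]
    _ ↔ (J l ℝ)⁻¹ * S * J l ℝ = -S :=
        exp_injOn_isSymm.eq_iff (isSymm_inv_J_mul_mul_J hS) hS.neg
    _ ↔ S ∈ symmetricSymplectic l := by
        rw [mem_symmetricSymplectic, mul_eq_mul_iff_inv_mul_mul_eq hJ, and_iff_right hS]

lemma spdLog_bijOn_posDefSymplectic :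
    (posDefSymplectic l).BijOn spdLog (symmetricSymplectic l) := by
  refine Set.InvOn.bijOn (f' := NormedSpace.exp)
    ⟨fun P hP => (spdLog_spec hP.1).2,
      fun S hS => spdLog_exp (mem_symmetricSymplectic.1 hS).1⟩ ?_ ?_
  · intro P hP
    obtain ⟨hsymm, hexp⟩ := spdLog_spec hP.1
    rw [SetLike.mem_coe, ← exp_mem_symplecticGroup_iff hsymm, hexp]
    exact hP.2
  · intro S hS
    have hsymm := (mem_symmetricSymplectic.1 hS).1
    exact ⟨posDef_exp hsymm, (exp_mem_symplecticGroup_iff hsymm).2 hS⟩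

lemma inv_mem_symplecticGroup {R : Type*} [CommRing R] {g : Matrix (l ⊕ l) (l ⊕ l) R}
    (hg : g ∈ symplecticGroup l R) : g⁻¹ ∈ symplecticGroup l R :=
  SymplecticGroup.coe_inv' ⟨g, hg⟩ ▸ (⟨g, hg⟩ : symplecticGroup l R)⁻¹.2

lemma mul_mul_transpose_mapsTo_posDefSymplectic {g : Matrix (l ⊕ l) (l ⊕ l) ℝ}
    (hg : g ∈ symplecticGroup l ℝ) :
    (posDefSymplectic l).MapsTo (fun P => g * P * gᵀ) (posDefSymplectic l) := fun _ hP =>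
  have hunit := (isUnit_iff_isUnit_det _).2 (SymplecticGroup.symplectic_det hg)
  ⟨(IsUnit.posDef_star_right_conjugate_iff hunit).2 hP.1,
    mul_mem (mul_mem hg hP.2) (SymplecticGroup.transpose_mem hg)⟩

lemma mul_mul_transpose_bijOn_posDefSymplectic {g : Matrix (l ⊕ l) (l ⊕ l) ℝ}
    (hg : g ∈ symplecticGroup l ℝ) :
    (posDefSymplectic l).BijOn (fun P => g * P * gᵀ) (posDefSymplectic l) := by
  have hdet := SymplecticGroup.symplectic_det hg
  refine Set.InvOn.bijOn (f' := fun P => g⁻¹ * P * g⁻¹ᵀ) ⟨fun P _ => ?_, fun P _ => ?_⟩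
    (mul_mul_transpose_mapsTo_posDefSymplectic hg)
    (mul_mul_transpose_mapsTo_posDefSymplectic (inv_mem_symplecticGroup hg))
  · simp only [Matrix.mul_assoc, ← transpose_mul, nonsing_inv_mul _ hdet, transpose_one,
      Matrix.mul_one, nonsing_inv_mul_cancel_left _ _ hdet]
  · simp only [Matrix.mul_assoc, ← transpose_mul, mul_nonsing_inv _ hdet, transpose_one,
      Matrix.mul_one, mul_nonsing_inv_cancel_left _ _ hdet]

end SymplecticPosDef

section SiegelUpperHalfSpace

variable {m : ℕ} {x : Matrix (Fin m) (Fin m) ℂ}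

lemma rePart_add_I_smul (u v : Matrix (Fin m) (Fin m) ℝ) :
    rePart (u.map ((↑) : ℝ → ℂ) + Complex.I • v.map ((↑) : ℝ → ℂ)) = u := by
  ext i j
  simp [rePart]

lemma imPart_add_I_smul (u v : Matrix (Fin m) (Fin m) ℝ) :
    imPart (u.map ((↑) : ℝ → ℂ) + Complex.I • v.map ((↑) : ℝ → ℂ)) = v := by
  ext i j
  simp [imPart]

lemma eq_of_rePart_eq_of_imPart_eq {x y : Matrix (Fin m) (Fin m) ℂ} (hre : rePart x = rePart y)
    (him : imPart x = imPart y) : x = y := by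
  ext i j
  exact Complex.ext (congrFun₂ hre i j) (congrFun₂ him i j)

lemma inSH_add_I_smul {u v : Matrix (Fin m) (Fin m) ℝ} (hu : u.IsSymm) (hv : v.PosDef) :
    inSH (u.map ((↑) : ℝ → ℂ) + Complex.I • v.map ((↑) : ℝ → ℂ)) :=
  ⟨u, v, hu, hv, rfl⟩

lemma inSH.rePart_isSymm (hx : inSH x) : (rePart x).IsSymm := by
  obtain ⟨u, v, hu, -, rfl⟩ := hx
  rwa [rePart_add_I_smul]

lemma inSH.imPart_posDef (hx : inSH x) : (imPart x).PosDef := by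
  obtain ⟨u, v, -, hv, rfl⟩ := hx
  rwa [imPart_add_I_smul]

lemma phiMap_mem_symplecticGroup (hx : inSH x) : phiMap x ∈ symplecticGroup (Fin m) ℝ := by
  have hr := (spdSqrt_spec hx.imPart_posDef).1
  have hrsymm := (spdSqrt_isSymm hx.imPart_posDef).eq
  rw [phiMap, SymplecticGroup.fromBlocks_mem_iff]
  refine ⟨by simp, ?_, ?_⟩
  · simp only [transpose_mul, transpose_nonsing_inv, hrsymm, hx.rePart_isSymm.eq, Matrix.mul_assoc]
  · rw [hrsymm, mul_nonsing_inv _ ((isUnit_iff_isUnit_det _).1 hr.isUnit), transpose_zero,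
      Matrix.zero_mul, sub_zero]

lemma phiMap_mul_transpose (hx : inSH x) :
    phiMap x * (phiMap x)ᵀ = fromBlocks
      (imPart x + rePart x * (imPart x)⁻¹ * rePart x) (rePart x * (imPart x)⁻¹)
      ((imPart x)⁻¹ * rePart x) (imPart x)⁻¹ := by
  have hsq := (spdSqrt_spec hx.imPart_posDef).2
  have hrsymm := (spdSqrt_isSymm hx.imPart_posDef).eq
  have hsq_inv : (spdSqrt (imPart x))⁻¹ * (spdSqrt (imPart x))⁻¹ = (imPart x)⁻¹ := by
    rw [← Matrix.mul_inv_rev, hsq]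
  rw [phiMap, fromBlocks_transpose, fromBlocks_multiply]
  simp only [transpose_mul, transpose_nonsing_inv, hrsymm, hx.rePart_isSymm.eq, transpose_zero,
    Matrix.mul_zero, Matrix.zero_mul, zero_add, hsq, Matrix.mul_assoc, hsq_inv,
    ← Matrix.mul_assoc (spdSqrt (imPart x))⁻¹]

lemma phiMap_mul_transpose_mem_posDefSymplectic (hx : inSH x) :
    phiMap x * (phiMap x)ᵀ ∈ posDefSymplectic (Fin m) := by
  have h := mul_mul_transpose_mapsTo_posDefSymplectic (phiMap_mem_symplecticGroup hx)
    ⟨PosDef.one, one_mem _⟩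
  simpa only [Matrix.mul_one] using h

lemma phiMap_mul_transpose_injOn :
    {x : Matrix (Fin m) (Fin m) ℂ | inSH x}.InjOn fun x => phiMap x * (phiMap x)ᵀ := by
  intro x hx y hy h
  have hdet := (isUnit_iff_isUnit_det _).1 hx.imPart_posDef.isUnit
  simp only [phiMap_mul_transpose hx, phiMap_mul_transpose hy, fromBlocks_inj] at h
  obtain ⟨-, hre, -, him⟩ := h
  have him : imPart x = imPart y := inv_inj him hdet
  refine eq_of_rePart_eq_of_imPart_eq ?_ him
  rw [← him] at hre
  exact hx.imPart_posDef.inv.isUnit.mul_right_cancel hre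

lemma phiMap_mul_transpose_surjOn :
    {x : Matrix (Fin m) (Fin m) ℂ | inSH x}.SurjOn (fun x => phiMap x * (phiMap x)ᵀ)
      (posDefSymplectic (Fin m)) := by
  rintro Q ⟨hpos, hsymp⟩
  obtain ⟨A, B, C, D, rfl⟩ : ∃ A B C D, Q = fromBlocks A B C D :=
    ⟨_, _, _, _, (fromBlocks_toBlocks Q).symm⟩
  have hD : D.PosDef := hpos.submatrix (e := Sum.inr) Sum.inr_injective
  have hdet := (isUnit_iff_isUnit_det _).1 hD.isUnit
  obtain ⟨hAsymm, rfl, -, hDsymm⟩ :=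
    isSymm_fromBlocks_iff.1 (isHermitian_iff_isSymm.1 hpos.isHermitian)
  obtain ⟨-, hBD, hAD⟩ := SymplecticGroup.fromBlocks_mem_iff.1 hsymp
  rw [hDsymm.eq] at hBD
  rw [hAsymm.eq, transpose_transpose] at hAD
  have hu : D⁻¹ * Bᵀ = B * D⁻¹ := by
    have hB : D⁻¹ * Bᵀ * D = B := (mul_eq_mul_iff_inv_mul_mul_eq hdet).1 hBD
    rw [← mul_nonsing_inv_cancel_right D (D⁻¹ * Bᵀ) hdet, hB]
  have husymm : (B * D⁻¹).IsSymm := by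
    rw [IsSymm, transpose_mul, transpose_nonsing_inv, hDsymm.eq, hu]
  have hq := inSH_add_I_smul husymm hD.inv
  refine ⟨_, hq, ?_⟩
  simp only [phiMap_mul_transpose hq, rePart_add_I_smul, imPart_add_I_smul]
  rw [nonsing_inv_nonsing_inv _ hdet, nonsing_inv_mul_cancel_right _ _ hdet, ← hu,
    mul_nonsing_inv_cancel_left _ _ hdet, hu]
  congr 1
  rw [sub_eq_iff_eq_add] at hAD
  calc D⁻¹ + B * (B * D⁻¹) = (1 + B * B) * D⁻¹ := by
        rw [Matrix.add_mul, Matrix.one_mul, Matrix.mul_assoc]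
    _ = A := by rw [← hAD, mul_nonsing_inv_cancel_right _ _ hdet]

lemma phiMap_mul_transpose_bijOn :
    {x : Matrix (Fin m) (Fin m) ℂ | inSH x}.BijOn (fun x => phiMap x * (phiMap x)ᵀ)
      (posDefSymplectic (Fin m)) :=
  ⟨fun _ => phiMap_mul_transpose_mem_posDefSymplectic, phiMap_mul_transpose_injOn,
    phiMap_mul_transpose_surjOn⟩

lemma spdLog_phiMap_mul_transpose_mem (hx : inSH x) :
    spdLog (phiMap x * (phiMap x)ᵀ) ∈ symmetricSymplectic (Fin m) :=
  spdLog_bijOn_posDefSymplectic.mapsTo (phiMap_mul_transpose_mem_posDefSymplectic hx)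

lemma Mlog_bijOn {p : Matrix (Fin m) (Fin m) ℂ} (hp : inSH p) :
    {q : Matrix (Fin m) (Fin m) ℂ | inSH q}.BijOn (Mlog p) (symmetricSymplectic (Fin m)) := by
  have hg := inv_mem_symplecticGroup (phiMap_mem_symplecticGroup hp)
  refine (spdLog_bijOn_posDefSymplectic.comp ((mul_mul_transpose_bijOn_posDefSymplectic hg).comp
    phiMap_mul_transpose_bijOn)).congr fun q _ => ?_
  simp only [Function.comp_apply, Mlog, Matrix.mul_assoc]

lemma Mlog_self {p : Matrix (Fin m) (Fin m) ℂ} (hp : inSH p) : Mlog p p = 0 := by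
  have hdet := SymplecticGroup.symplectic_det (phiMap_mem_symplecticGroup hp)
  rw [Mlog, nonsing_inv_mul _ hdet, Matrix.one_mul, ← transpose_mul, nonsing_inv_mul _ hdet,
    transpose_one, spdLog_one]

end SiegelUpperHalfSpace

lemma bijOn_piMap {ι : Type*} {α β : ι → Type*} {f : (i : ι) → α i → β i}
    {s : (i : ι) → Set (α i)} {t : (i : ι) → Set (β i)} (h : ∀ i, (s i).BijOn (f i) (t i)) :
    (Set.univ.pi s).BijOn (Pi.map f) (Set.univ.pi t) := by
  refine ⟨Set.piMap_mapsTo_pi fun i _ => (h i).mapsTo, fun x hx y hy hxy => ?_, fun y hy => ?_⟩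
  · exact funext fun i => (h i).injOn (hx i trivial) (hy i trivial) (congrFun hxy i)
  · choose x hx hxy using fun i => (h i).surjOn (hy i trivial)
    exact ⟨x, fun i _ => hx i, funext hxy⟩

/-- Theorem 2, for a product of Siegel factors: the
point-to-hyperplane distance on a product X = SH_{m_1} × … × SH_{m_L}. -/
theorem point_to_hyperplane_distance_product (L : ℕ) (hL : 1 ≤ L)
    (mdim : Fin L → ℕ) (hmdim : ∀ j, 1 ≤ mdim j)
    (x a p : (j : Fin L) → Matrix (Fin (mdim j)) (Fin (mdim j)) ℂ)
    (hx : ∀ j, inSH (x j)) (ha : ∀ j, inSH (a j)) (hp : ∀ j, inSH (p j))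
    (hxp : x ≠ p)
    (hai : ∃ j, a j ≠ Complex.I • (1 : Matrix (Fin (mdim j)) (Fin (mdim j)) ℂ)) :
    Real.sqrt (1 -
        (sSup {c : ℝ |
          ∃ q : (j : Fin L) → Matrix (Fin (mdim j)) (Fin (mdim j)) ℂ,
            (∀ j, inSH (q j)) ∧
            (∑ j, frobInner (Mlog (p j) (q j))
                (spdLog (phiMap (a j) * (phiMap (a j))ᵀ))) = 0 ∧
            q ≠ p ∧
            c = (∑ j, frobInner (Mlog (p j) (q j)) (Mlog (p j) (x j))) /
                (Real.sqrt (∑ j, frobNorm (Mlog (p j) (q j)) ^ 2) *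
                  Real.sqrt (∑ j, frobNorm (Mlog (p j) (x j)) ^ 2))}) ^ 2) *
      Real.sqrt (∑ j, frobNorm (Mlog (p j) (x j)) ^ 2)
    = |∑ j, frobInner (Mlog (p j) (x j))
          (spdLog (phiMap (a j) * (phiMap (a j))ᵀ))| /
        Real.sqrt (∑ j, frobNorm (spdLog (phiMap (a j) * (phiMap (a j))ᵀ)) ^ 2) := by
  let V : Submodule ℝ ((j : Fin L) → Matrix (Fin (mdim j) ⊕ Fin (mdim j)) _ ℝ) :=
    Submodule.pi Set.univ fun j => symmetricSymplectic (Fin (mdim j))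
  have hM : (Set.univ.pi fun j => {q | inSH q}).BijOn (Pi.map fun j => Mlog (p j)) V :=
    bijOn_piMap fun j => Mlog_bijOn (hp j)
  have hMp : Pi.map (fun j => Mlog (p j)) p = 0 := funext fun j => Mlog_self (hp j)
  have hA : (fun j => spdLog (phiMap (a j) * (phiMap (a j))ᵀ)) ∈ V := fun j _ =>
    spdLog_phiMap_mul_transpose_mem (ha j)
  have hX : (fun j => Mlog (p j) (x j)) ∈ V := hM.mapsTo fun j _ => hx j
  rw [← sqrt_one_sub_sSup_frobInner_hyperplane V hA hX]
  congr 5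
  ext c
  constructor
  · rintro ⟨q, hq, hqA, hqp, rfl⟩
    refine ⟨_, hM.mapsTo fun j _ => hq j, hqA, fun hq0 => hqp ?_, rfl⟩
    exact hM.injOn (fun j _ => hq j) (fun j _ => hp j) (hq0.trans hMp.symm)
  · rintro ⟨Y, hY, hYA, hY0, rfl⟩
    obtain ⟨q, hq, rfl⟩ := hM.surjOn hY
    exact ⟨q, fun j => hq j trivial, hYA, fun hqp => hY0 (hqp ▸ hMp), rfl⟩
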